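/- Let b_1,…,b_m be integers and define sequences of integers e_i and d_i for 0 ≤ i ≤ m by e_0 = 1, d_0 = 1, e_{i+1} = −(−1)^{b_{i+1}}·e_i (that is, e_{i+1} = e_i if b_{i+1} is odd and e_{i+1} = −e_i if b_{i+1} is even), and d_{i+1} = d_i + e_{i+1}. Then D_m(b_1,…,b_m) ≡ f_{|d_m|} (mod 2), i.e., every coefficient of D_m(b_1,…,b_m) − f_{|d_m|} is even. -/

import Mathlib

open Polynomial

/-- The Fibonacci polynomials: `f 0 = 0`, `f 1 = 1`, `f (n+2) = X * f (n+1) + f n`. -/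
noncomputable def fibP : ℕ → Polynomial ℤ
  | 0 => 0
  | 1 => 1
  | n + 2 => X * fibP (n + 1) + fibP n

/-- The extended Euler continuant polynomials: `D b 0 = 1`, `D b 1 = b₁ z`,
`D b k = bₖ z ⬝ D b (k-1) + D b (k-2)` (with the convention `D b (-1) = 0`). -/
noncomputable def contD (b : ℕ → ℤ) : ℕ → Polynomial ℤ
  | 0 => 1
  | 1 => C (b 1) * X
  | k + 2 => C (b (k + 2)) * X * contD b (k + 1) + contD b k

/-! Modulo 2 the recurrence of the Fibonacci polynomials is that of the rescaled Chebyshev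
polynomials of the second kind, so `f_{|k|} ≡ S_{k-1}` for every integer `k`. In characteristic 2
the recurrence of `S` is moreover symmetric under reversal of the index, so it can be run in the
direction of either sign `ε`: `S_{n+ε} = z S_n + S_{n-ε}`. If `D_{k-1} ≡ S_n` and
`D_{k-2} ≡ S_{n-ε}`, then `D_k = b_k z D_{k-1} + D_{k-2}` is congruent to `S_{n+ε}` when `b_k` is
odd and to `S_{n-ε}` when `b_k` is even: the sign `ε` is kept or flipped, and the index moves one
step in the new direction. -/

section CharacteristicTwo

variable (R : Type*) [CommRing R] [CharP R 2]

theorem chebyshevS_add_of_isUnit (n : ℤ) {ε : ℤ} (hε : IsUnit ε) :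
    Chebyshev.S R (n + ε) = X * Chebyshev.S R n + Chebyshev.S R (n - ε) := by
  have forward : Chebyshev.S R (n + 1) = X * Chebyshev.S R n + Chebyshev.S R (n - 1) := by
    rw [Chebyshev.S_add_one, CharTwo.sub_eq_add]
  rcases Int.isUnit_iff.mp hε with rfl | rfl
  · exact forward
  · rw [← sub_eq_add_neg, sub_neg_eq_add, forward, CharTwo.add_cancel_left]

theorem chebyshevS_add_ite_odd (n a : ℤ) {ε : ℤ} (hε : IsUnit ε) :
    Chebyshev.S R (n + if Odd a then ε else -ε) =
      C (a : R) * X * Chebyshev.S R n + Chebyshev.S R (n - ε) := by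
  by_cases ha : Odd a
  · have cast_eq_one : (a : R) = 1 := by
      rw [CharTwo.intCast_eq_ite, if_neg (Int.not_even_iff_odd.mpr ha)]
    rw [if_pos ha, cast_eq_one, C_1, one_mul, chebyshevS_add_of_isUnit R n hε]
  · have cast_eq_zero : (a : R) = 0 := by
      rw [CharTwo.intCast_eq_ite, if_pos (Int.not_odd_iff_even.mp ha)]
    rw [if_neg ha, cast_eq_zero, C_0, zero_mul, zero_mul, zero_add, sub_eq_add_neg]

theorem map_fibP_eq_chebyshevS (n : ℕ) :
    (fibP n).map (Int.castRingHom R) = Chebyshev.S R (n - 1) := by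
  induction n using Nat.twoStepInduction with
  | zero => simp [fibP]
  | one => simp [fibP]
  | more n ih₀ ih₁ =>
    have index_eq : ((n + 2 : ℕ) : ℤ) - 1 = ((n + 1 : ℕ) - 1) + 1 := by push_cast; ring
    have index_pred_eq : ((n + 1 : ℕ) : ℤ) - 1 - 1 = n - 1 := by push_cast; ring
    rw [fibP, Polynomial.map_add, Polynomial.map_mul, map_X, ih₀, ih₁, index_eq,
      chebyshevS_add_of_isUnit R _ isUnit_one, index_pred_eq]

theorem map_fibP_natAbs_eq_chebyshevS (k : ℤ) :
    (fibP k.natAbs).map (Int.castRingHom R) = Chebyshev.S R (k - 1) := by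
  rw [map_fibP_eq_chebyshevS]
  rcases Int.natAbs_eq k with hk | hk
  · rw [← hk]
  · rw [hk, Int.natAbs_neg, Int.natAbs_natCast, Chebyshev.S_neg_sub_one, CharTwo.neg_eq]

end CharacteristicTwo

theorem isUnit_of_succ_eq_ite_neg {M : Type*} [Monoid M] [HasDistribNeg M] {e : ℕ → M}
    {p : ℕ → Prop} [DecidablePred p] (h0 : IsUnit (e 0))
    (hsucc : ∀ i, e (i + 1) = if p i then e i else -e i) (i : ℕ) : IsUnit (e i) := by
  induction i with
  | zero => exact h0
  | succ i ih =>
    rw [hsucc]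
    split_ifs
    exacts [ih, ih.neg]

theorem map_contD_eq_chebyshevS (R : Type*) [CommRing R] [CharP R 2] {b e d : ℕ → ℤ}
    (he0 : e 0 = 1) (hd0 : d 0 = 1)
    (he : ∀ i, e (i + 1) = if Odd (b (i + 1)) then e i else -e i)
    (hd : ∀ i, d (i + 1) = d i + e (i + 1)) (m : ℕ) :
    (contD b m).map (Int.castRingHom R) = Chebyshev.S R (d m - 1) := by
  have he_unit : ∀ i, IsUnit (e i) := isUnit_of_succ_eq_ite_neg (he0 ▸ isUnit_one) he
  have chebyshevS_succ (i : ℕ) : Chebyshev.S R (d (i + 1) - 1) =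
      C (b (i + 1) : R) * X * Chebyshev.S R (d i - 1) + Chebyshev.S R (d i - 1 - e i) := by
    rw [hd, he, add_sub_right_comm, chebyshevS_add_ite_odd R _ _ (he_unit i)]
  induction m using Nat.twoStepInduction with
  | zero => simp [contD, hd0]
  | one => simp [contD, chebyshevS_succ, hd0, he0]
  | more k ih₀ ih₁ =>
    have index_eq : d (k + 1) - 1 - e (k + 1) = d k - 1 := by rw [hd]; ring
    rw [chebyshevS_succ, index_eq, ← ih₀, ← ih₁]
    simp [contD]

theorem dvd_coeff_sub_of_map_zmod_eq {N : ℕ} {p q : ℤ[X]}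
    (h : p.map (Int.castRingHom (ZMod N)) = q.map (Int.castRingHom (ZMod N))) (n : ℕ) :
    (N : ℤ) ∣ (p - q).coeff n := by
  rw [← ZMod.intCast_zmod_eq_zero_iff_dvd, ← eq_intCast (Int.castRingHom (ZMod N)), ← coeff_map,
    Polynomial.map_sub, h, sub_self, coeff_zero]

/-- Algorithm determining the index `d` with `D_m(b₁,…,b_m) ≡ f_d (mod 2)`:
with `e₀ = d₀ = 1`, `e_{i+1} = -(-1)^{b_{i+1}} e_i` (i.e. `e_{i+1} = e_i` if `b_{i+1}` is odd
and `e_{i+1} = -e_i` otherwise) and `d_{i+1} = d_i + e_{i+1}`, one has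
`D_m(b₁,…,b_m) ≡ f_{|d_m|} (mod 2)`. -/
theorem contD_congr_fibP_algorithm (m : ℕ) (b : ℕ → ℤ) (e d : ℕ → ℤ)
    (he0 : e 0 = 1) (hd0 : d 0 = 1)
    (he : ∀ i, e (i + 1) = if Odd (b (i + 1)) then e i else -e i)
    (hd : ∀ i, d (i + 1) = d i + e (i + 1)) :
    ∀ n, 2 ∣ (contD b m - fibP (d m).natAbs).coeff n := by
  have map_eq : (contD b m).map (Int.castRingHom (ZMod 2)) =
      (fibP (d m).natAbs).map (Int.castRingHom (ZMod 2)) := by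
    rw [map_contD_eq_chebyshevS (ZMod 2) he0 hd0 he hd, map_fibP_natAbs_eq_chebyshevS]
  exact dvd_coeff_sub_of_map_zmod_eq map_eq
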